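/- arXiv:1705.06884 — 2 statements merged into one kernel-verified Lean document; each statement's English description precedes it below -/
import Mathlib

section
/- There exists a constant L > 0, independent of y, such that for every y ∈ Y the map W ↦ ∇_W ℓ2(y,W) = (W h*(y,W) + r*(y,W) − y) h*(y,W)^T is L-Lipschitz on C with respect to the Frobenius norm, i.e., ‖∇_W ℓ2(y,W₁) − ∇_W ℓ2(y,W₂)‖_F ≤ L ‖W₁ − W₂‖_F for all W₁, W₂ ∈ C. -/
/-!
Strong convexity makes the minimizer `x*` of `x ↦ ½‖y - A x‖² + g x` a Lipschitz function of the
operator `A`: add the quadratic growth of the objectives for `A₁` and `A₂` at their respective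
minimizers; the regularizer `g` cancels, and what is left on the right is the increment of
`x ↦ ½‖y - A₁ x‖² - ½‖y - A₂ x‖²` from `x₁` to `x₂`, which is at most a multiple of
`‖A₁ - A₂‖ * ‖x₁ - x₂‖`. Here `x = (h, r)` in the `L²` product and `A (h, r) = W h + r`, so that
`A₁ - A₂` has norm at most `‖W₁ - W₂‖`. The gradient is the outer product of the residual
`A x* - y` with the first component of `x*`, a bilinear expression in bounded Lipschitz quantities.
-/

open scoped RealInnerProductSpace ENNReal

noncomputable section

/-- `ℝ^d` with the Euclidean norm. -/
abbrev Vec (d : ℕ) := EuclideanSpace ℝ (Fin d)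

/-- `ℝ^{d×k}` with the Frobenius (Euclidean) norm, viewed as a Euclidean space. -/
abbrev Mat (d k : ℕ) := EuclideanSpace ℝ (Fin d × Fin k)

/-- Matrix-vector product `W h`. -/
def matMulVec {d k : ℕ} (W : Mat d k) (h : Vec k) : Vec d :=
  (WithLp.equiv 2 (Fin d → ℝ)).symm (fun i => ∑ j, W (i, j) * h j)

/-- The function `ℓ̃₂(y, W, h, r) = (1/2)‖y − Wh − r‖² + φ(h) + ϕ(r)`, with values in `[0,∞]`. -/
def ell2t {d k : ℕ} (φ : Vec k → ℝ≥0∞) (ϕ' : Vec d → ℝ≥0∞)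
    (y : Vec d) (W : Mat d k) (h : Vec k) (r : Vec d) : ℝ≥0∞ :=
  ENNReal.ofReal (‖y - matMulVec W h - r‖ ^ 2 / 2) + φ h + ϕ' r

/-- Convexity for functions with values in `[0,∞]`. -/
def ConvexFnENN {E : Type*} [AddCommMonoid E] [Module ℝ E] (γ : E → ℝ≥0∞) : Prop :=
  ∀ x y : E, ∀ a b : ℝ, 0 ≤ a → 0 ≤ b → a + b = 1 →
    γ (a • x + b • y) ≤ ENNReal.ofReal a * γ x + ENNReal.ofReal b * γ y

/-- The matrix `(W h + r − y) hᵀ`, the claimed gradient of `ℓ₂(y, ·)` at `W`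
    (with `h = h*(y,W)`, `r = r*(y,W)`). -/
def gradFormula {d k : ℕ} (y : Vec d) (W : Mat d k) (h : Vec k) (r : Vec d) : Mat d k :=
  (WithLp.equiv 2 (Fin d × Fin k → ℝ)).symm
    (fun p => (matMulVec W h + r - y) p.1 * h p.2)

section Bilinear

variable {𝕜 E F G : Type*} [NontriviallyNormedField 𝕜]
  [SeminormedAddCommGroup E] [NormedSpace 𝕜 E] [SeminormedAddCommGroup F] [NormedSpace 𝕜 F]
  [SeminormedAddCommGroup G] [NormedSpace 𝕜 G]

lemma norm_map₂_sub_map₂_le {f : E →L[𝕜] F →L[𝕜] G} {C : ℝ} (hf : ‖f‖ ≤ C) (a₁ a₂ : E)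
    (b₁ b₂ : F) :
    ‖f a₁ b₁ - f a₂ b₂‖ ≤ C * (‖a₁ - a₂‖ * ‖b₁‖ + ‖a₂‖ * ‖b₁ - b₂‖) := by
  have norm_map₂_le (a : E) (b : F) : ‖f a b‖ ≤ C * (‖a‖ * ‖b‖) :=
    (f.le_opNorm₂ a b).trans (by rw [mul_assoc]; gcongr)
  calc ‖f a₁ b₁ - f a₂ b₂‖ = ‖f (a₁ - a₂) b₁ + f a₂ (b₁ - b₂)‖ := by
        rw [map_sub, map_sub, sub_apply, sub_add_sub_cancel]
    _ ≤ C * (‖a₁ - a₂‖ * ‖b₁‖) + C * (‖a₂‖ * ‖b₁ - b₂‖) :=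
        norm_add_le_of_le (norm_map₂_le _ _) (norm_map₂_le _ _)
    _ = C * (‖a₁ - a₂‖ * ‖b₁‖ + ‖a₂‖ * ‖b₁ - b₂‖) := (mul_add ..).symm

lemma norm_apply_sub_apply_le (A₁ A₂ : E →L[𝕜] F) (x₁ x₂ : E) :
    ‖A₁ x₁ - A₂ x₂‖ ≤ ‖A₁ - A₂‖ * ‖x₁‖ + ‖A₂‖ * ‖x₁ - x₂‖ := by
  simpa only [one_mul, ContinuousLinearMap.id_apply] using
    norm_map₂_sub_map₂_le (f := .id 𝕜 (E →L[𝕜] F)) ContinuousLinearMap.norm_id_le A₁ A₂ x₁ x₂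

end Bilinear

section UniqueMinimizer

variable {E β : Type*}

/-- `x` is the only minimizer of `f` on `s`. -/
structure IsUniqueMinOn [Preorder β] (f : E → β) (s : Set E) (x : E) : Prop where
  mem : x ∈ s
  isMinOn : IsMinOn f s x
  eq_of_isMinOn : ∀ z ∈ s, IsMinOn f s z → z = x

lemma IsUniqueMinOn.eq_of_eq_top [PartialOrder β] [OrderTop β] {f : E → β} {s : Set E} {x z : E}
    (h : IsUniqueMinOn f s x) (hfx : f x = ⊤) (hz : z ∈ s) : z = x :=
  h.eq_of_isMinOn z hz fun _ hw ↦
    le_top.trans_eq (top_le_iff.1 (hfx.symm.trans_le (h.isMinOn hw))).symm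

end UniqueMinimizer

section StrongConvexity

variable {E : Type*} [NormedAddCommGroup E] [NormedSpace ℝ E] {s : Set E} {m : ℝ} {x z : E}

lemma strongConvexOn_quadratic_growth {f : E → ℝ} (hf : StrongConvexOn s m f)
    (hx : x ∈ s) (hmin : IsMinOn f s x) (hz : z ∈ s) :
    m / 2 * ‖z - x‖ ^ 2 ≤ f z - f x := by
  have growth_of_lt_one : ∀ a ∈ Set.Ioo (0 : ℝ) 1, a * (m / 2 * ‖z - x‖ ^ 2) ≤ f z - f x := by
    rintro a ⟨ha₀, ha₁⟩
    have hconv := hf.2 hz hx (sub_nonneg.2 ha₁.le) ha₀.le (sub_add_cancel 1 a)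
    have hle : f x ≤ f ((1 - a) • z + a • x) :=
      hmin (hf.1 hz hx (sub_nonneg.2 ha₁.le) ha₀.le (sub_add_cancel 1 a))
    simp only [smul_eq_mul] at hconv
    refine le_of_mul_le_mul_left ?_ (sub_pos.2 ha₁)
    linarith
  have htendsto : Filter.Tendsto (fun a : ℝ ↦ a * (m / 2 * ‖z - x‖ ^ 2)) (nhdsWithin 1 (Set.Iio 1))
      (nhds (1 * (m / 2 * ‖z - x‖ ^ 2))) :=
    ((continuous_mul_const _).tendsto 1).mono_left nhdsWithin_le_nhds
  rw [one_mul] at htendsto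
  exact le_of_tendsto htendsto
    (Filter.eventually_of_mem (Ioo_mem_nhdsLT zero_lt_one) growth_of_lt_one)

/-- Strong convexity on `s` with modulus `m`, for functions with values in `[0,∞]`; the quadratic
gain stands on the left so that no subtraction in `[0,∞]` occurs. -/
def StrongConvexOnENN (s : Set E) (m : ℝ) (f : E → ℝ≥0∞) : Prop :=
  Convex ℝ s ∧ ∀ ⦃x⦄, x ∈ s → ∀ ⦃y⦄, y ∈ s → ∀ ⦃a b : ℝ⦄, 0 ≤ a → 0 ≤ b → a + b = 1 →
    f (a • x + b • y) + ENNReal.ofReal (m / 2 * (a * b) * ‖x - y‖ ^ 2)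
      ≤ ENNReal.ofReal a * f x + ENNReal.ofReal b * f y

namespace StrongConvexOnENN

variable {f : E → ℝ≥0∞}

lemma strongConvexOn_toReal (hf : StrongConvexOnENN s m f) :
    StrongConvexOn {x ∈ s | f x ≠ ⊤} m fun x ↦ (f x).toReal := by
  have combo_ne_top {a b : ℝ} {x y : E} (hx : f x ≠ ⊤) (hy : f y ≠ ⊤) :
      ENNReal.ofReal a * f x + ENNReal.ofReal b * f y ≠ ⊤ :=
    ENNReal.add_ne_top.2
      ⟨ENNReal.mul_ne_top ENNReal.ofReal_ne_top hx, ENNReal.mul_ne_top ENNReal.ofReal_ne_top hy⟩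
  have map_ne_top {a b : ℝ} {x y : E} (hx : x ∈ s ∧ f x ≠ ⊤) (hy : y ∈ s ∧ f y ≠ ⊤) (ha : 0 ≤ a)
      (hb : 0 ≤ b) (hab : a + b = 1) : f (a • x + b • y) ≠ ⊤ :=
    ne_top_of_le_ne_top (combo_ne_top hx.2 hy.2)
      (le_self_add.trans (hf.2 hx.1 hy.1 ha hb hab))
  refine ⟨fun x hx y hy a b ha hb hab ↦
    ⟨hf.1 hx.1 hy.1 ha hb hab, map_ne_top hx hy ha hb hab⟩, fun x hx y hy a b ha hb hab ↦ ?_⟩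
  have hreal := ENNReal.toReal_mono (combo_ne_top hx.2 hy.2) (hf.2 hx.1 hy.1 ha hb hab)
  rw [ENNReal.toReal_add (map_ne_top hx hy ha hb hab) ENNReal.ofReal_ne_top,
    ENNReal.toReal_add (ENNReal.mul_ne_top ENNReal.ofReal_ne_top hx.2)
      (ENNReal.mul_ne_top ENNReal.ofReal_ne_top hy.2),
    ENNReal.toReal_mul, ENNReal.toReal_mul, ENNReal.toReal_ofReal ha, ENNReal.toReal_ofReal hb,
    ENNReal.toReal_ofReal'] at hreal
  simp only [smul_eq_mul]
  linarith [le_max_left (m / 2 * (a * b) * ‖x - y‖ ^ 2) 0]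

lemma quadratic_growth (hf : StrongConvexOnENN s m f) (hx : x ∈ s) (hmin : IsMinOn f s x)
    (hz : z ∈ s) (hfz : f z ≠ ⊤) :
    m / 2 * ‖z - x‖ ^ 2 ≤ (f z).toReal - (f x).toReal :=
  strongConvexOn_quadratic_growth hf.strongConvexOn_toReal
    ⟨hx, ne_top_of_le_ne_top hfz (hmin hz)⟩
    (fun _ hw ↦ ENNReal.toReal_mono hw.2 (hmin hw.1)) ⟨hz, hfz⟩

end StrongConvexOnENN

end StrongConvexity

section RegularizedLeastSquares

variable {X F : Type*} [NormedAddCommGroup X] [NormedSpace ℝ X]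
  [NormedAddCommGroup F] [InnerProductSpace ℝ F] {y : F} {A₁ A₂ : X →L[ℝ] F} {x₁ x₂ : X}
  {α β γ : ℝ}

lemma half_sq_residual_sub (y : F) (A₁ A₂ : X →L[ℝ] F) (x : X) :
    ‖y - A₁ x‖ ^ 2 / 2 - ‖y - A₂ x‖ ^ 2 / 2
      = ⟪(A₁ - A₂) x, (A₁ + A₂) x - (2 : ℝ) • y⟫ / 2 := by
  have hneg : ⟪(A₁ - A₂) x, (A₁ + A₂) x - (2 : ℝ) • y⟫
      = ⟪(y - A₁ x) - (y - A₂ x), (y - A₁ x) + (y - A₂ x)⟫ := by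
    rw [← inner_neg_neg, sub_apply, add_apply, two_smul]
    congr 1 <;> abel
  rw [hneg, inner_sub_left, inner_add_right, inner_add_right, real_inner_comm (y - A₂ x),
    real_inner_self_eq_norm_sq, real_inner_self_eq_norm_sq]
  ring

lemma half_sq_residual_sub_sub_le (hA₁ : ‖A₁‖ ≤ α) (hA₂ : ‖A₂‖ ≤ α) (hx₁ : ‖x₁‖ ≤ β)
    (hx₂ : ‖x₂‖ ≤ β) (hy : ‖y‖ ≤ γ) :
    (‖y - A₁ x₂‖ ^ 2 / 2 - ‖y - A₂ x₂‖ ^ 2 / 2) - (‖y - A₁ x₁‖ ^ 2 / 2 - ‖y - A₂ x₁‖ ^ 2 / 2)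
      ≤ (2 * α * β + γ) * ‖A₁ - A₂‖ * ‖x₂ - x₁‖ := by
  have hβ : 0 ≤ β := (norm_nonneg x₁).trans hx₁
  set D := A₁ - A₂
  set S : X → F := fun x ↦ (A₁ + A₂) x - (2 : ℝ) • y with hS
  have hsum : ‖A₁ + A₂‖ ≤ 2 * α := (norm_add_le_of_le hA₁ hA₂).trans_eq (two_mul α).symm
  have hS_norm : ‖S x₂‖ ≤ 2 * α * β + 2 * γ :=
    norm_sub_le_of_le ((A₁ + A₂).le_of_opNorm_le_of_le hsum hx₂)
      (by rw [norm_smul, Real.norm_two]; gcongr)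
  have hS_sub : ‖S x₂ - S x₁‖ ≤ 2 * α * ‖x₂ - x₁‖ := by
    rw [hS, sub_sub_sub_cancel_right, ← map_sub]
    exact (A₁ + A₂).le_of_opNorm_le hsum _
  rw [half_sq_residual_sub, half_sq_residual_sub]
  calc ⟪D x₂, S x₂⟫ / 2 - ⟪D x₁, S x₁⟫ / 2 = (⟪D x₂, S x₂⟫ - ⟪D x₁, S x₁⟫) / 2 := by ring
    _ ≤ (‖D x₂ - D x₁‖ * ‖S x₂‖ + ‖D x₁‖ * ‖S x₂ - S x₁‖) / 2 := by
        gcongr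
        simpa only [one_mul, Real.norm_eq_abs, innerSL_apply_apply] using! (le_abs_self _).trans
          (norm_map₂_sub_map₂_le (norm_innerSL_le ℝ) (D x₂) (D x₁) (S x₂) (S x₁))
    _ ≤ (‖D‖ * ‖x₂ - x₁‖ * (2 * α * β + 2 * γ) + ‖D‖ * β * (2 * α * ‖x₂ - x₁‖)) / 2 := by
        rw [← map_sub]
        gcongr
        · exact D.le_opNorm _
        · exact D.le_of_opNorm_le_of_le le_rfl hx₁
    _ = (2 * α * β + γ) * ‖D‖ * ‖x₂ - x₁‖ := by ring

/-- The regularized least-squares objective `½‖y - A x‖² + g x`. -/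
def regLeastSquares (g : X → ℝ≥0∞) (y : F) (A : X →L[ℝ] F) (x : X) : ℝ≥0∞ :=
  ENNReal.ofReal (‖y - A x‖ ^ 2 / 2) + g x

lemma regLeastSquares_ne_top_iff {g : X → ℝ≥0∞} {A : X →L[ℝ] F} {x : X} :
    regLeastSquares g y A x ≠ ⊤ ↔ g x ≠ ⊤ := by
  simp [regLeastSquares]

lemma toReal_regLeastSquares {g : X → ℝ≥0∞} {x : X} (hgx : g x ≠ ⊤) (y : F) (A : X →L[ℝ] F) :
    (regLeastSquares g y A x).toReal = ‖y - A x‖ ^ 2 / 2 + (g x).toReal := by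
  rw [regLeastSquares, ENNReal.toReal_add ENNReal.ofReal_ne_top hgx,
    ENNReal.toReal_ofReal (by positivity)]

lemma mul_norm_argmin_regLeastSquares_sub_le {g : X → ℝ≥0∞} {s : Set X} {m : ℝ}
    (hf₁ : StrongConvexOnENN s m (regLeastSquares g y A₁))
    (hf₂ : StrongConvexOnENN s m (regLeastSquares g y A₂))
    (hmin₁ : IsUniqueMinOn (regLeastSquares g y A₁) s x₁)
    (hx₂s : x₂ ∈ s) (hmin₂ : IsMinOn (regLeastSquares g y A₂) s x₂)
    (hA₁ : ‖A₁‖ ≤ α) (hA₂ : ‖A₂‖ ≤ α) (hx₁ : ‖x₁‖ ≤ β) (hx₂ : ‖x₂‖ ≤ β) (hy : ‖y‖ ≤ γ) :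
    m * ‖x₁ - x₂‖ ≤ (2 * α * β + γ) * ‖A₁ - A₂‖ := by
  have hα : 0 ≤ α := (norm_nonneg A₁).trans hA₁
  have hβ : 0 ≤ β := (norm_nonneg x₁).trans hx₁
  have hγ : 0 ≤ γ := (norm_nonneg y).trans hy
  obtain rfl | hne := eq_or_ne x₁ x₂
  · rw [sub_self, norm_zero, mul_zero]
    positivity
  have hg₁ : g x₁ ≠ ⊤ := regLeastSquares_ne_top_iff.1 fun htop ↦
    hne (hmin₁.eq_of_eq_top htop hx₂s).symm
  have hg₂ : g x₂ ≠ ⊤ := regLeastSquares_ne_top_iff.1 <|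
    ne_top_of_le_ne_top (regLeastSquares_ne_top_iff.2 hg₁) (hmin₂ hmin₁.mem)
  have growth₁ := hf₁.quadratic_growth hmin₁.mem hmin₁.isMinOn hx₂s
    (regLeastSquares_ne_top_iff.2 hg₂)
  have growth₂ := hf₂.quadratic_growth hx₂s hmin₂ hmin₁.mem
    (regLeastSquares_ne_top_iff.2 hg₁)
  rw [toReal_regLeastSquares hg₁, toReal_regLeastSquares hg₂] at growth₁ growth₂
  rw [norm_sub_rev x₁ x₂] at growth₂ ⊢
  have hdata := half_sq_residual_sub_sub_le hA₁ hA₂ hx₁ hx₂ hy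
  refine le_of_mul_le_mul_right ?_ (norm_pos_iff.2 (sub_ne_zero.2 hne.symm))
  linarith

end RegularizedLeastSquares

section MatrixProducts

variable {d k : ℕ}

lemma norm_matMulVec_le (W : Mat d k) (h : Vec k) : ‖matMulVec W h‖ ≤ ‖W‖ * ‖h‖ := by
  refine le_of_sq_le_sq ?_ (by positivity)
  rw [mul_pow, EuclideanSpace.real_norm_sq_eq, EuclideanSpace.real_norm_sq_eq,
    EuclideanSpace.real_norm_sq_eq, Fintype.sum_prod_type, Finset.sum_mul]
  exact Finset.sum_le_sum fun i _ ↦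
    Finset.sum_mul_sq_le_sq_mul_sq Finset.univ (fun j ↦ W (i, j)) fun j ↦ h j

/-- The matrix-vector product as a bounded bilinear map. -/
def matMulVecL : Mat d k →L[ℝ] Vec k →L[ℝ] Vec d :=
  LinearMap.mkContinuous₂
    (LinearMap.mk₂ ℝ matMulVec
      (fun W V h ↦ by ext i; simp [matMulVec, add_mul, Finset.sum_add_distrib])
      (fun c W h ↦ by ext i; simp [matMulVec, Finset.mul_sum, mul_assoc])
      (fun W h g ↦ by ext i; simp [matMulVec, mul_add, Finset.sum_add_distrib])
      (fun c W h ↦ by ext i; simp [matMulVec, Finset.mul_sum, mul_left_comm]))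
    1 (fun W h ↦ (norm_matMulVec_le W h).trans_eq (by rw [one_mul]))

/-- The outer product `e hᵀ`. -/
def outerProd (e : Vec d) (h : Vec k) : Mat d k :=
  WithLp.toLp 2 fun p ↦ e p.1 * h p.2

lemma norm_outerProd (e : Vec d) (h : Vec k) : ‖outerProd e h‖ = ‖e‖ * ‖h‖ := by
  refine (sq_eq_sq₀ (norm_nonneg _) (by positivity)).1 ?_
  rw [mul_pow, EuclideanSpace.real_norm_sq_eq, EuclideanSpace.real_norm_sq_eq,
    EuclideanSpace.real_norm_sq_eq, Fintype.sum_prod_type, Finset.sum_mul_sum]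
  simp only [outerProd, mul_pow]

/-- The outer product as a bounded bilinear map. -/
def outerProdL : Vec d →L[ℝ] Vec k →L[ℝ] Mat d k :=
  LinearMap.mkContinuous₂
    (LinearMap.mk₂ ℝ outerProd
      (fun e f h ↦ by ext p; simp [outerProd, add_mul])
      (fun c e h ↦ by ext p; simp [outerProd, mul_assoc])
      (fun e h g ↦ by ext p; simp [outerProd, mul_add])
      (fun c e h ↦ by ext p; simp [outerProd, mul_left_comm]))
    1 (fun e h ↦ (norm_outerProd e h).le.trans_eq (by rw [one_mul]))

lemma norm_outerProdL_le : ‖(outerProdL : Vec d →L[ℝ] Vec k →L[ℝ] Mat d k)‖ ≤ 1 :=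
  LinearMap.mkContinuous₂_norm_le _ zero_le_one _

end MatrixProducts

section CodeOutlier

variable {d k : ℕ}

/-- Pairs `(h, r)` of a coefficient and an outlier, with `‖(h, r)‖² = ‖h‖² + ‖r‖²`, the norm
for which the joint strong convexity of the objective is stated. -/
abbrev CodeOutlier (d k : ℕ) := WithLp 2 (Vec k × Vec d)

/-- The set `H × R` of admissible pairs. -/
def codeOutlierSet (H : Set (Vec k)) (R : Set (Vec d)) : Set (CodeOutlier d k) :=
  WithLp.ofLp ⁻¹' (H ×ˢ R)

lemma convex_codeOutlierSet {H : Set (Vec k)} {R : Set (Vec d)} (hH : Convex ℝ H)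
    (hR : Convex ℝ R) : Convex ℝ (codeOutlierSet H R) :=
  (hH.prod hR).linear_preimage (WithLp.linearEquiv 2 ℝ (Vec k × Vec d)).toLinearMap

lemma isBounded_codeOutlierSet {H : Set (Vec k)} {R : Set (Vec d)} (hH : Bornology.IsBounded H)
    (hR : Bornology.IsBounded R) : Bornology.IsBounded (codeOutlierSet H R) :=
  (WithLp.prod_antilipschitzWith_ofLp 2 (Vec k) (Vec d)).isBounded_preimage (hH.prod hR)

/-- The model `(h, r) ↦ W h + r` of the data. -/
def dataModel (W : Mat d k) : CodeOutlier d k →L[ℝ] Vec d :=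
  matMulVecL W ∘L WithLp.fstL 2 ℝ (Vec k) (Vec d) + WithLp.sndL 2 ℝ (Vec k) (Vec d)

lemma dataModel_apply (W : Mat d k) (x : CodeOutlier d k) :
    dataModel W x = matMulVec W x.fst + x.snd := rfl

lemma norm_dataModel_le (W : Mat d k) : ‖dataModel W‖ ≤ ‖W‖ + 1 := by
  refine ContinuousLinearMap.opNorm_le_bound _ (by positivity) fun x ↦ ?_
  rw [dataModel_apply, add_one_mul]
  refine norm_add_le_of_le ((norm_matMulVec_le _ _).trans ?_) (WithLp.norm_snd_le _ x)
  gcongr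
  exact WithLp.norm_fst_le _ x

lemma norm_dataModel_sub_le (W₁ W₂ : Mat d k) : ‖dataModel W₁ - dataModel W₂‖ ≤ ‖W₁ - W₂‖ := by
  refine ContinuousLinearMap.opNorm_le_bound _ (by positivity) fun x ↦ ?_
  have hsub : dataModel W₁ - dataModel W₂ = matMulVecL (W₁ - W₂) ∘L WithLp.fstL 2 ℝ _ _ := by
    rw [dataModel, dataModel, add_sub_add_right_eq_sub, ← ContinuousLinearMap.sub_comp, ← map_sub]
  rw [hsub]
  refine (norm_matMulVec_le (W₁ - W₂) x.fst).trans ?_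
  gcongr
  exact WithLp.norm_fst_le _ x

/-- The total penalty `φ(h) + ϕ(r)`. -/
def penalty (φ : Vec k → ℝ≥0∞) (ϕ' : Vec d → ℝ≥0∞) (x : CodeOutlier d k) : ℝ≥0∞ :=
  φ x.fst + ϕ' x.snd

lemma regLeastSquares_dataModel (φ : Vec k → ℝ≥0∞) (ϕ' : Vec d → ℝ≥0∞) (y : Vec d) (W : Mat d k)
    (x : CodeOutlier d k) :
    regLeastSquares (penalty φ ϕ') y (dataModel W) x = ell2t φ ϕ' y W x.fst x.snd := by
  rw [regLeastSquares, penalty, ell2t, dataModel_apply, sub_add_eq_sub_sub, add_assoc]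

lemma norm_gradFormula_sub_gradFormula_le {y : Vec d} {W₁ W₂ : Mat d k} {x₁ x₂ : CodeOutlier d k}
    {α β γ : ℝ} (hW₂ : ‖dataModel W₂‖ ≤ α) (hx₁ : ‖x₁‖ ≤ β) (hx₂ : ‖x₂‖ ≤ β) (hy : ‖y‖ ≤ γ) :
    ‖gradFormula y W₁ x₁.fst x₁.snd - gradFormula y W₂ x₂.fst x₂.snd‖
      ≤ β ^ 2 * ‖W₁ - W₂‖ + (2 * α * β + γ) * ‖x₁ - x₂‖ := by
  have hα : 0 ≤ α := (norm_nonneg _).trans hW₂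
  have hβ : 0 ≤ β := (norm_nonneg x₁).trans hx₁
  have residual_sub_le : ‖(dataModel W₁ x₁ - y) - (dataModel W₂ x₂ - y)‖
      ≤ ‖W₁ - W₂‖ * β + α * ‖x₁ - x₂‖ := by
    rw [sub_sub_sub_cancel_right]
    refine (norm_apply_sub_apply_le _ _ _ _).trans ?_
    gcongr
    exact norm_dataModel_sub_le W₁ W₂
  have residual_le : ‖dataModel W₂ x₂ - y‖ ≤ α * β + γ :=
    norm_sub_le_of_le ((dataModel W₂).le_of_opNorm_le_of_le hW₂ hx₂) hy
  calc ‖gradFormula y W₁ x₁.fst x₁.snd - gradFormula y W₂ x₂.fst x₂.snd‖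
      = ‖outerProdL (dataModel W₁ x₁ - y) x₁.fst - outerProdL (dataModel W₂ x₂ - y) x₂.fst‖ := rfl
    _ ≤ ‖(dataModel W₁ x₁ - y) - (dataModel W₂ x₂ - y)‖ * ‖x₁.fst‖
          + ‖dataModel W₂ x₂ - y‖ * ‖x₁.fst - x₂.fst‖ := by
        simpa only [one_mul] using norm_map₂_sub_map₂_le norm_outerProdL_le (dataModel W₁ x₁ - y)
          (dataModel W₂ x₂ - y) x₁.fst x₂.fst
    _ ≤ (‖W₁ - W₂‖ * β + α * ‖x₁ - x₂‖) * β + (α * β + γ) * ‖x₁ - x₂‖ := by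
        gcongr
        · exact (WithLp.norm_fst_le _ x₁).trans hx₁
        · exact (norm_nonneg _).trans residual_le
        · exact WithLp.norm_fst_le _ (x₁ - x₂)
    _ = β ^ 2 * ‖W₁ - W₂‖ + (2 * α * β + γ) * ‖x₁ - x₂‖ := by ring

lemma strongConvexOnENN_dataModel {φ : Vec k → ℝ≥0∞} {ϕ' : Vec d → ℝ≥0∞} {H : Set (Vec k)}
    {R : Set (Vec d)} {ν : ℝ} {y : Vec d} {W : Mat d k} (hH : Convex ℝ H) (hR : Convex ℝ R)
    (hsc : ∀ h₁ ∈ H, ∀ h₂ ∈ H, ∀ r₁ ∈ R, ∀ r₂ ∈ R, ∀ a b : ℝ, 0 ≤ a → 0 ≤ b → a + b = 1 →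
      ell2t φ ϕ' y W (a • h₁ + b • h₂) (a • r₁ + b • r₂)
          + ENNReal.ofReal (ν / 2 * (a * b) * (‖h₁ - h₂‖ ^ 2 + ‖r₁ - r₂‖ ^ 2))
        ≤ ENNReal.ofReal a * ell2t φ ϕ' y W h₁ r₁ + ENNReal.ofReal b * ell2t φ ϕ' y W h₂ r₂) :
    StrongConvexOnENN (codeOutlierSet H R) ν
      (regLeastSquares (penalty φ ϕ') y (dataModel W)) := by
  refine ⟨convex_codeOutlierSet hH hR, fun x₁ hx₁ x₂ hx₂ a b ha hb hab ↦ ?_⟩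
  simp only [regLeastSquares_dataModel, WithLp.prod_norm_sq_eq_of_L2]
  exact hsc _ hx₁.1 _ hx₂.1 _ hx₁.2 _ hx₂.2 a b ha hb hab

lemma isUniqueMinOn_dataModel {φ : Vec k → ℝ≥0∞} {ϕ' : Vec d → ℝ≥0∞} {H : Set (Vec k)}
    {R : Set (Vec d)} {y : Vec d} {W : Mat d k} {h : Vec k} {r : Vec d} (hh : h ∈ H) (hr : r ∈ R)
    (hmin : ∀ h' ∈ H, ∀ r' ∈ R, ell2t φ ϕ' y W h r ≤ ell2t φ ϕ' y W h' r')
    (huniq : ∀ h₀ ∈ H, ∀ r₀ ∈ R,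
      (∀ h' ∈ H, ∀ r' ∈ R, ell2t φ ϕ' y W h₀ r₀ ≤ ell2t φ ϕ' y W h' r') → h₀ = h ∧ r₀ = r) :
    IsUniqueMinOn (regLeastSquares (penalty φ ϕ') y (dataModel W)) (codeOutlierSet H R)
      (WithLp.toLp 2 (h, r)) where
  mem := ⟨hh, hr⟩
  isMinOn x hx := by
    simpa only [regLeastSquares_dataModel] using! hmin _ hx.1 _ hx.2
  eq_of_isMinOn z hz hzmin := by
    have hz_le : ∀ h' ∈ H, ∀ r' ∈ R, ell2t φ ϕ' y W z.fst z.snd ≤ ell2t φ ϕ' y W h' r' :=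
      fun h' hh' r' hr' ↦ by
        simpa only [regLeastSquares_dataModel] using!
          hzmin (show WithLp.toLp 2 (h', r') ∈ codeOutlierSet H R from ⟨hh', hr'⟩)
    obtain ⟨hfst, hsnd⟩ := huniq _ hz.1 _ hz.2 hz_le
    exact WithLp.ofLp_injective 2 (Prod.ext hfst hsnd)

end CodeOutlier

theorem grad_ell2_lipschitz_general {d k : ℕ}
    {φ : Vec k → ℝ≥0∞} {ϕ' : Vec d → ℝ≥0∞} {H : Set (Vec k)} {R : Set (Vec d)} {ν : ℝ}
    (hν : 0 < ν) (hHconv : Convex ℝ H) (hHbdd : Bornology.IsBounded H)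
    (hRconv : Convex ℝ R) (hRbdd : Bornology.IsBounded R)
    (hsc : ∀ (y : Vec d) (W : Mat d k), ∀ h₁ ∈ H, ∀ h₂ ∈ H, ∀ r₁ ∈ R, ∀ r₂ ∈ R,
      ∀ a b : ℝ, 0 ≤ a → 0 ≤ b → a + b = 1 →
        ell2t φ ϕ' y W (a • h₁ + b • h₂) (a • r₁ + b • r₂)
            + ENNReal.ofReal (ν / 2 * (a * b) * (‖h₁ - h₂‖ ^ 2 + ‖r₁ - r₂‖ ^ 2))
          ≤ ENNReal.ofReal a * ell2t φ ϕ' y W h₁ r₁ + ENNReal.ofReal b * ell2t φ ϕ' y W h₂ r₂)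
    {hstar : Vec d → Mat d k → Vec k} {rstar : Vec d → Mat d k → Vec d}
    (hstar_mem : ∀ y W, hstar y W ∈ H) (rstar_mem : ∀ y W, rstar y W ∈ R)
    (hmin : ∀ (y : Vec d) (W : Mat d k), ∀ h ∈ H, ∀ r ∈ R,
        ell2t φ ϕ' y W (hstar y W) (rstar y W) ≤ ell2t φ ϕ' y W h r)
    (huniq : ∀ (y : Vec d) (W : Mat d k), ∀ h ∈ H, ∀ r ∈ R,
        (∀ h' ∈ H, ∀ r' ∈ R, ell2t φ ϕ' y W h r ≤ ell2t φ ϕ' y W h' r') →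
        h = hstar y W ∧ r = rstar y W)
    {Y : Set (Vec d)} (hYbdd : Bornology.IsBounded Y)
    {C : Set (Mat d k)} (hCbdd : Bornology.IsBounded C) :
    ∃ L : ℝ, 0 < L ∧ ∀ y ∈ Y, ∀ W₁ ∈ C, ∀ W₂ ∈ C,
      ‖gradFormula y W₁ (hstar y W₁) (rstar y W₁)
          - gradFormula y W₂ (hstar y W₂) (rstar y W₂)‖
        ≤ L * ‖W₁ - W₂‖ := by
  obtain ⟨β, hβ, hβ_le⟩ := (isBounded_codeOutlierSet hHbdd hRbdd).exists_pos_norm_le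
  obtain ⟨γ, hγ, hγ_le⟩ := hYbdd.exists_pos_norm_le
  obtain ⟨ω, hω, hω_le⟩ := hCbdd.exists_pos_norm_le
  have model_le {W : Mat d k} (hW : W ∈ C) : ‖dataModel W‖ ≤ ω + 1 :=
    (norm_dataModel_le W).trans (by gcongr; exact hω_le W hW)
  set κ := 2 * (ω + 1) * β + γ
  refine ⟨β ^ 2 + κ * (κ / ν), by positivity, fun y hy W₁ hW₁ W₂ hW₂ ↦ ?_⟩
  set x : Mat d k → CodeOutlier d k := fun W ↦ WithLp.toLp 2 (hstar y W, rstar y W)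
  have hx (W : Mat d k) : IsUniqueMinOn (regLeastSquares (penalty φ ϕ') y (dataModel W))
      (codeOutlierSet H R) (x W) :=
    isUniqueMinOn_dataModel (hstar_mem y W) (rstar_mem y W) (hmin y W) (huniq y W)
  have argmin_sub_le : ‖x W₁ - x W₂‖ ≤ κ / ν * ‖W₁ - W₂‖ := by
    rw [div_mul_eq_mul_div, le_div_iff₀' hν]
    refine (mul_norm_argmin_regLeastSquares_sub_le
      (strongConvexOnENN_dataModel hHconv hRconv (hsc y W₁))
      (strongConvexOnENN_dataModel hHconv hRconv (hsc y W₂)) (hx W₁) (hx W₂).mem (hx W₂).isMinOn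
      (model_le hW₁) (model_le hW₂) (hβ_le _ (hx W₁).mem) (hβ_le _ (hx W₂).mem)
      (hγ_le y hy)).trans ?_
    gcongr
    exact norm_dataModel_sub_le W₁ W₂
  calc ‖gradFormula y W₁ (hstar y W₁) (rstar y W₁) - gradFormula y W₂ (hstar y W₂) (rstar y W₂)‖
      ≤ β ^ 2 * ‖W₁ - W₂‖ + κ * ‖x W₁ - x W₂‖ :=
        norm_gradFormula_sub_gradFormula_le (x₁ := x W₁) (x₂ := x W₂) (model_le hW₂)
          (hβ_le _ (hx W₁).mem) (hβ_le _ (hx W₂).mem) (hγ_le y hy)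
    _ ≤ β ^ 2 * ‖W₁ - W₂‖ + κ * (κ / ν * ‖W₁ - W₂‖) := by gcongr
    _ = (β ^ 2 + κ * (κ / ν)) * ‖W₁ - W₂‖ := by ring

/-- The gradient `W ↦ ∇_W ℓ₂(y, W)` is L-Lipschitz on C, uniformly in y ∈ Y. -/
theorem grad_ell2_lipschitz {d k : ℕ}
    (φ : Vec k → ℝ≥0∞) (ϕ' : Vec d → ℝ≥0∞)
    (H : Set (Vec k)) (R : Set (Vec d)) (ν : ℝ) (hν : 0 < ν)
    (hφconv : ConvexFnENN φ) (hφproper : ∃ h, φ h ≠ ⊤) (hφclosed : LowerSemicontinuous φ)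
    (hϕconv : ConvexFnENN ϕ') (hϕproper : ∃ r, ϕ' r ≠ ⊤) (hϕclosed : LowerSemicontinuous ϕ')
    (hHne : H.Nonempty) (hHconv : Convex ℝ H) (hHcomp : IsCompact H)
    (hRne : R.Nonempty) (hRconv : Convex ℝ R) (hRcomp : IsCompact R)
    -- joint ν-strong convexity of `ℓ̃₂(y, W, ·, ·)` on `H × R`
    (hsc : ∀ (y : Vec d) (W : Mat d k), ∀ h₁ ∈ H, ∀ h₂ ∈ H, ∀ r₁ ∈ R, ∀ r₂ ∈ R,
      ∀ a b : ℝ, 0 ≤ a → 0 ≤ b → a + b = 1 →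
        ell2t φ ϕ' y W (a • h₁ + b • h₂) (a • r₁ + b • r₂)
            + ENNReal.ofReal (ν / 2 * (a * b) * (‖h₁ - h₂‖ ^ 2 + ‖r₁ - r₂‖ ^ 2))
          ≤ ENNReal.ofReal a * ell2t φ ϕ' y W h₁ r₁ + ENNReal.ofReal b * ell2t φ ϕ' y W h₂ r₂)
    -- `(hstar y W, rstar y W)` is the (unique) minimizer of `ℓ̃₂(y, W, ·, ·)` over `H × R`
    (hstar : Vec d → Mat d k → Vec k) (rstar : Vec d → Mat d k → Vec d)
    (hstar_mem : ∀ y W, hstar y W ∈ H) (rstar_mem : ∀ y W, rstar y W ∈ R)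
    (hmin : ∀ (y : Vec d) (W : Mat d k), ∀ h ∈ H, ∀ r ∈ R,
        ell2t φ ϕ' y W (hstar y W) (rstar y W) ≤ ell2t φ ϕ' y W h r)
    (huniq : ∀ (y : Vec d) (W : Mat d k), ∀ h ∈ H, ∀ r ∈ R,
        (∀ h' ∈ H, ∀ r' ∈ R, ell2t φ ϕ' y W h r ≤ ell2t φ ϕ' y W h' r') →
        h = hstar y W ∧ r = rstar y W)
    (Y : Set (Vec d)) (hYcomp : IsCompact Y)
    (C : Set (Mat d k)) (hCcomp : IsCompact C) (hCconv : Convex ℝ C) :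
    ∃ L : ℝ, 0 < L ∧ ∀ y ∈ Y, ∀ W₁ ∈ C, ∀ W₂ ∈ C,
      ‖gradFormula y W₁ (hstar y W₁) (rstar y W₁)
          - gradFormula y W₂ (hstar y W₂) (rstar y W₂)‖
        ≤ L * ‖W₁ - W₂‖ :=
  grad_ell2_lipschitz_general hν hHconv hHcomp.isBounded hRconv hRcomp.isBounded hsc hstar_mem
    rstar_mem hmin huniq hYcomp.isBounded hCcomp.isBounded
end
end

section
/- Let f′ = g + ψ′ on a Euclidean space ℰ, where g: ℰ → ℝ is differentiable with L-Lipschitz gradient and ψ′: ℰ → [0,∞] is proper, closed and convex. Fix η > 0, a point W ∈ ℰ and a direction V ∈ ℰ, and set W⁺ = prox_{ηψ′}(W − ηV) and W̃ = prox_{ηψ′}(W − η∇g(W)). Then f′(W⁺) ≤ f′(W) + ⟨W⁺ − W̃, ∇g(W) − V⟩ + (L/2 − 1/(2η)) ‖W⁺ − W‖² + (L − 1/(2η)) ‖W̃ − W‖² − (1/(2η)) ‖W⁺ − W̃‖². -/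
open scoped RealInnerProductSpace ENNReal

noncomputable section

/-- `p = prox_{ηγ}(x)`, i.e. `p` minimizes `u ↦ ηγ(u) + (1/2)‖u − x‖²`. -/
def IsProxPt {E : Type*} [NormedAddCommGroup E] (γ : E → ℝ≥0∞) (η : ℝ) (x p : E) : Prop :=
  ∀ u : E, ENNReal.ofReal η * γ p + ENNReal.ofReal (‖p - x‖ ^ 2 / 2)
      ≤ ENNReal.ofReal η * γ u + ENNReal.ofReal (‖u - x‖ ^ 2 / 2)

/-!
The prox objective `γ + (1/(2η))‖· − x‖²` is `1/η`-strongly convex, so it grows at least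
quadratically away from its minimizer. Apply this growth to `W⁺` against `W̃` and to `W̃` against
`W`: the values `ψ(W̃)` cancel in the sum. The descent lemma bounds `g(W⁺)`, and the three linear
terms collapse to `⟪W⁺ − W̃, ∇g(W) − V⟫`.
-/

section Descent

variable {E F : Type*} [NormedAddCommGroup E] [NormedSpace ℝ E]
  [NormedAddCommGroup F] [NormedSpace ℝ F] {s : Set E} {x y : E} {L : ℝ}

theorem norm_image_sub_sub_le_of_norm_hasFDerivWithinAt_sub_le {f : E → F} {f' : E → E →L[ℝ] F}
    (hs : StarConvex ℝ x s) (hf : ∀ z ∈ s, HasFDerivWithinAt f (f' z) s z)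
    (hL : ∀ z ∈ s, ‖f' z - f' x‖ ≤ L * ‖z - x‖) (hy : y ∈ s) :
    ‖f y - f x - f' x (y - x)‖ ≤ L / 2 * ‖y - x‖ ^ 2 := by
  set d := y - x with hd
  let r : ℝ → F := fun t ↦ f (x + t • d) - f x - t • f' x d
  have hmem : Set.MapsTo (fun t : ℝ ↦ x + t • d) (Set.Icc 0 1) s :=
    fun t ht ↦ hs.add_smul_sub_mem hy ht.1 ht.2
  have hr : ∀ t ∈ Set.Icc (0 : ℝ) 1,
      HasDerivWithinAt r ((f' (x + t • d) - f' x) d) (Set.Icc 0 1) t := by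
    intro t ht
    have hline : HasDerivWithinAt (fun t : ℝ ↦ x + t • d) d (Set.Icc 0 1) t := by
      simpa using ((hasDerivWithinAt_id t _).smul_const d).const_add x
    have hlin : HasDerivWithinAt (fun t : ℝ ↦ t • f' x d) (f' x d) (Set.Icc 0 1) t := by
      simpa using (hasDerivWithinAt_id t _).smul_const (f' x d)
    exact (((hf _ (hmem ht)).comp_hasDerivWithinAt t hline hmem).sub_const (f x)).sub hlin
  have hB : ∀ t : ℝ, HasDerivAt (fun t ↦ L / 2 * ‖d‖ ^ 2 * t ^ 2) (L * ‖d‖ ^ 2 * t) t := by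
    intro t
    refine ((hasDerivAt_pow 2 t).const_mul (L / 2 * ‖d‖ ^ 2)).congr_deriv ?_
    simp only [Nat.cast_ofNat, Nat.add_one_sub_one, pow_one]
    ring
  have hbound : ∀ t ∈ Set.Ico (0 : ℝ) 1, ‖(f' (x + t • d) - f' x) d‖ ≤ L * ‖d‖ ^ 2 * t := by
    intro t ht
    calc ‖(f' (x + t • d) - f' x) d‖
        ≤ ‖f' (x + t • d) - f' x‖ * ‖d‖ := ContinuousLinearMap.le_opNorm _ _
      _ ≤ L * ‖x + t • d - x‖ * ‖d‖ := by gcongr; exact hL _ (hmem (Set.Ico_subset_Icc_self ht))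
      _ = L * ‖d‖ ^ 2 * t := by
        rw [add_sub_cancel_left, norm_smul, Real.norm_of_nonneg ht.1]
        ring
  have hr_le := image_norm_le_of_norm_deriv_right_le_deriv_boundary
    (fun t ht ↦ (hr t ht).continuousWithinAt)
    (fun t ht ↦ (hr t (Set.Ico_subset_Icc_self ht)).mono_of_mem_nhdsWithin
      (Icc_mem_nhdsGE_of_mem ht))
    (by simp [r]) hB hbound (Set.right_mem_Icc.2 zero_le_one)
  simpa [r, hd] using hr_le

theorem image_le_add_of_norm_hasFDerivWithinAt_sub_le {f : E → ℝ} {f' : E → E →L[ℝ] ℝ}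
    (hs : StarConvex ℝ x s) (hf : ∀ z ∈ s, HasFDerivWithinAt f (f' z) s z)
    (hL : ∀ z ∈ s, ‖f' z - f' x‖ ≤ L * ‖z - x‖) (hy : y ∈ s) :
    f y ≤ f x + f' x (y - x) + L / 2 * ‖y - x‖ ^ 2 := by
  have h := le_of_abs_le (norm_image_sub_sub_le_of_norm_hasFDerivWithinAt_sub_le hs hf hL hy)
  linarith

end Descent

open Filter Topology in
theorem add_modulus_le_of_isMinOn_of_uniformConvexOn {E : Type*} [NormedAddCommGroup E]
    [NormedSpace ℝ E] {s : Set E} {φ : ℝ → ℝ} {f : E → ℝ} {p z : E} (hf : UniformConvexOn s φ f)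
    (hmin : IsMinOn f s p) (hp : p ∈ s) (hz : z ∈ s) : f p + φ ‖p - z‖ ≤ f z := by
  have hseg : ∀ t ∈ Set.Ioo (0 : ℝ) 1, f p + (1 - t) * φ ‖p - z‖ ≤ f z := by
    intro t ⟨ht0, ht1⟩
    have ht1' : 0 ≤ 1 - t := by linarith
    have hle : f p ≤ (1 - t) * f p + t * f z - (1 - t) * t * φ ‖p - z‖ :=
      (hmin (hf.1 hp hz ht1' ht0.le (by ring))).trans (hf.2 hp hz ht1' ht0.le (by ring))
    refine le_of_mul_le_mul_left ?_ ht0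
    linarith
  have hlim : Tendsto (fun t : ℝ ↦ f p + (1 - t) * φ ‖p - z‖) (𝓝[>] 0)
      (𝓝 (f p + (1 - 0) * φ ‖p - z‖)) :=
    (Continuous.tendsto (by fun_prop) 0).mono_left nhdsWithin_le_nhds
  rw [sub_zero, one_mul] at hlim
  exact le_of_tendsto hlim (eventually_of_mem (Ioo_mem_nhdsGT one_pos) hseg)

theorem strongConvexOn_add_norm_sub_sq {E : Type*} [NormedAddCommGroup E] [InnerProductSpace ℝ E]
    {s : Set E} {f : E → ℝ} (hf : ConvexOn ℝ s f) (m : ℝ) (x : E) :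
    StrongConvexOn s m fun u ↦ f u + m / 2 * ‖u - x‖ ^ 2 := by
  have haffine : ConvexOn ℝ s fun u ↦ f u + (innerSL ℝ (-m • x) u + m / 2 * ‖x‖ ^ 2) :=
    hf.add (((innerSL ℝ (-m • x)).toLinearMap.convexOn hf.1).add_const _)
  refine strongConvexOn_iff_convex.2 (haffine.congr fun u _ ↦ ?_)
  simp only [innerSL_apply_apply, real_inner_smul_left, norm_sub_sq_real, real_inner_comm u x]
  ring

theorem ConvexFnENN.convexOn_toReal {E : Type*} [AddCommMonoid E] [Module ℝ E] {γ : E → ℝ≥0∞}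
    (hγ : ConvexFnENN γ) : ConvexOn ℝ {x | γ x ≠ ⊤} fun x ↦ (γ x).toReal := by
  have hfin : ∀ (c : ℝ) {x : E}, γ x ≠ ⊤ → ENNReal.ofReal c * γ x ≠ ⊤ :=
    fun _ _ hx ↦ ENNReal.mul_ne_top ENNReal.ofReal_ne_top hx
  refine ⟨fun x hx y hy a b ha hb hab ↦ ?_, fun x hx y hy a b ha hb hab ↦ ?_⟩
  · exact ne_top_of_le_ne_top (ENNReal.add_ne_top.2 ⟨hfin a hx, hfin b hy⟩) (hγ x y a b ha hb hab)
  · have h := ENNReal.toReal_mono (ENNReal.add_ne_top.2 ⟨hfin a hx, hfin b hy⟩)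
      (hγ x y a b ha hb hab)
    rwa [ENNReal.toReal_add (hfin a hx) (hfin b hy), ENNReal.toReal_mul, ENNReal.toReal_mul,
      ENNReal.toReal_ofReal ha, ENNReal.toReal_ofReal hb] at h

namespace IsProxPt

section NormedAddCommGroup

variable {E : Type*} [NormedAddCommGroup E] {γ : E → ℝ≥0∞} {η : ℝ} {x p u : E}

theorem ne_top (h : IsProxPt γ η x p) (hη : 0 < η) (hu : γ u ≠ ⊤) : γ p ≠ ⊤ := by
  intro hp
  have hle := h u
  rw [hp, ENNReal.mul_top (ENNReal.ofReal_pos.2 hη).ne', top_add, top_le_iff] at hle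
  exact ENNReal.add_ne_top.2 ⟨ENNReal.mul_ne_top ENNReal.ofReal_ne_top hu,
    ENNReal.ofReal_ne_top⟩ hle

theorem isMinOn (h : IsProxPt γ η x p) (hη : 0 < η) :
    IsMinOn (fun u ↦ (γ u).toReal + η⁻¹ / 2 * ‖u - x‖ ^ 2) {u | γ u ≠ ⊤} p := by
  intro u hu
  have hobj : ∀ {v}, γ v ≠ ⊤ → ENNReal.ofReal η * γ v + ENNReal.ofReal (‖v - x‖ ^ 2 / 2)
      = ENNReal.ofReal (η * ((γ v).toReal + η⁻¹ / 2 * ‖v - x‖ ^ 2)) := by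
    intro v hv
    have hscale : η * ((γ v).toReal + η⁻¹ / 2 * ‖v - x‖ ^ 2)
        = η * (γ v).toReal + ‖v - x‖ ^ 2 / 2 := by field_simp
    rw [hscale, ENNReal.ofReal_add (by positivity) (by positivity), ENNReal.ofReal_mul hη.le,
      ENNReal.ofReal_toReal hv]
  have hle := h u
  rw [hobj (h.ne_top hη hu), hobj hu, ENNReal.ofReal_le_ofReal_iff (by positivity)] at hle
  exact le_of_mul_le_mul_left hle hη

end NormedAddCommGroup

variable {E : Type*} [NormedAddCommGroup E] [InnerProductSpace ℝ E]
  {γ : E → ℝ≥0∞} {η : ℝ} {x W V p z : E}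

theorem toReal_add_norm_sub_sq_le (h : IsProxPt γ η x p) (hγ : ConvexFnENN γ) (hη : 0 < η)
    (hz : γ z ≠ ⊤) :
    (γ p).toReal + η⁻¹ / 2 * ‖p - x‖ ^ 2 + η⁻¹ / 2 * ‖p - z‖ ^ 2
      ≤ (γ z).toReal + η⁻¹ / 2 * ‖z - x‖ ^ 2 :=
  add_modulus_le_of_isMinOn_of_uniformConvexOn
    (strongConvexOn_add_norm_sub_sq hγ.convexOn_toReal η⁻¹ x) (h.isMinOn hη) (h.ne_top hη hz) hz

theorem toReal_le_add_inner (h : IsProxPt γ η (W - η • V) p) (hγ : ConvexFnENN γ) (hη : 0 < η)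
    (hz : γ z ≠ ⊤) :
    (γ p).toReal ≤ (γ z).toReal + ⟪V, z - p⟫
      + 1 / (2 * η) * (‖z - W‖ ^ 2 - ‖p - W‖ ^ 2 - ‖p - z‖ ^ 2) := by
  have hexpand : ∀ u : E, η⁻¹ / 2 * ‖u - (W - η • V)‖ ^ 2
      = 1 / (2 * η) * ‖u - W‖ ^ 2 + ⟪V, u - W⟫ + η / 2 * ‖V‖ ^ 2 := by
    intro u
    rw [← sub_add, norm_add_sq_real, real_inner_smul_right, norm_smul, Real.norm_of_nonneg hη.le,
      real_inner_comm]
    field_simp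
  have hgrowth := h.toReal_add_norm_sub_sq_le hγ hη hz
  have hcoef : η⁻¹ / 2 = 1 / (2 * η) := by field_simp
  have hinner : ⟪V, z - p⟫ = ⟪V, z - W⟫ - ⟪V, p - W⟫ := by
    rw [← inner_sub_right, sub_sub_sub_cancel_right]
  rw [hexpand, hexpand, hcoef] at hgrowth
  rw [hinner]
  linarith

end IsProxPt

-- `innerSL ℝ (g' z)` as derivative says that `g' z` is the gradient of `g` at `z`; Mathlib's
-- `HasGradientWithinAt` is only defined on complete spaces.
theorem prox_step_descent_bound_general {E : Type*} [NormedAddCommGroup E] [InnerProductSpace ℝ E]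
    {g : E → ℝ} {g' : E → E} {ψ : E → ℝ≥0∞} {s : Set E} {L η : ℝ} {W V Wplus Wtilde : E}
    (hs : StarConvex ℝ W s) (hg : ∀ z ∈ s, HasFDerivWithinAt g (innerSL ℝ (g' z)) s z)
    (hlip : ∀ z ∈ s, ‖g' z - g' W‖ ≤ L * ‖z - W‖) (hψ : ConvexFnENN ψ) (hη : 0 < η)
    (hWplus : IsProxPt ψ η (W - η • V) Wplus) (hWtilde : IsProxPt ψ η (W - η • g' W) Wtilde)
    (hmem : Wplus ∈ s) :
    (g Wplus : EReal) + (ψ Wplus : EReal)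
      ≤ (g W : EReal) + (ψ W : EReal)
        + ((⟪Wplus - Wtilde, g' W - V⟫ + (L / 2 - 1 / (2 * η)) * ‖Wplus - W‖ ^ 2
            - 1 / (2 * η) * ‖Wtilde - W‖ ^ 2
            - 1 / (2 * η) * ‖Wplus - Wtilde‖ ^ 2 : ℝ) : EReal) := by
  by_cases hW : ψ W = ⊤
  · rw [hW, EReal.coe_ennreal_top, EReal.coe_add_top, EReal.top_add_coe]
    exact le_top
  have htilde : ψ Wtilde ≠ ⊤ := hWtilde.ne_top hη hW
  have hplus_step := hWplus.toReal_le_add_inner hψ hη htilde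
  have htilde_step := hWtilde.toReal_le_add_inner hψ hη hW
  have hdescent : g Wplus ≤ g W + ⟪g' W, Wplus - W⟫ + L / 2 * ‖Wplus - W‖ ^ 2 :=
    image_le_add_of_norm_hasFDerivWithinAt_sub_le hs hg
      (fun z hz ↦ by simpa only [← map_sub, innerSL_apply_norm] using hlip z hz) hmem
  have hinner : ⟪V, Wtilde - Wplus⟫ + ⟪g' W, W - Wtilde⟫ + ⟪g' W, Wplus - W⟫
      = ⟪Wplus - Wtilde, g' W - V⟫ := by
    rw [real_inner_comm (g' W - V)]
    simp only [inner_sub_left, inner_sub_right]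
    ring
  rw [← EReal.coe_ennreal_toReal (hWplus.ne_top hη hW), ← EReal.coe_ennreal_toReal hW]
  norm_cast
  rw [sub_self, norm_zero] at htilde_step
  linarith

/-- Key recursion inequality: bound on `f′(W⁺)` after a proximal step
with search direction `V`, compared with the exact proximal-gradient point `W̃`. -/
theorem prox_step_descent_bound {E : Type*}
    [NormedAddCommGroup E] [InnerProductSpace ℝ E] [CompleteSpace E]
    (g : E → ℝ) (ψ' : E → ℝ≥0∞) (L : ℝ) (hL : 0 ≤ L)
    (hdiff : Differentiable ℝ g)
    (hlip : ∀ a b : E, ‖gradient g a - gradient g b‖ ≤ L * ‖a - b‖)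
    (hconv : ConvexFnENN ψ') (hproper : ∃ x, ψ' x ≠ ⊤) (hclosed : LowerSemicontinuous ψ')
    (η : ℝ) (hη : 0 < η) (W V Wplus Wtilde : E)
    (hWplus : IsProxPt ψ' η (W - η • V) Wplus)
    (hWtilde : IsProxPt ψ' η (W - η • gradient g W) Wtilde) :
    (g Wplus : EReal) + (ψ' Wplus : EReal)
      ≤ (g W : EReal) + (ψ' W : EReal)
        + ((⟪Wplus - Wtilde, gradient g W - V⟫ + (L / 2 - 1 / (2 * η)) * ‖Wplus - W‖ ^ 2
            + (L - 1 / (2 * η)) * ‖Wtilde - W‖ ^ 2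
            - (1 / (2 * η)) * ‖Wplus - Wtilde‖ ^ 2 : ℝ) : EReal) := by
  refine (prox_step_descent_bound_general (starConvex_univ W)
    (fun z _ ↦ (hdiff z).hasGradientAt.hasFDerivAt.hasFDerivWithinAt) (fun z _ ↦ hlip z W)
    hconv hη hWplus hWtilde (Set.mem_univ _)).trans ?_
  gcongr
  linarith [mul_nonneg hL (sq_nonneg ‖Wtilde - W‖)]
end
end
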